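/- If w is a prefix normal binary word, then the word w0 (w extended by appending the symbol 0) is also prefix normal. -/

import Mathlib

/-- A binary word (list of Booleans, `true` = 1) is prefix normal if no substring
has more 1s than the prefix of the same length. -/
def IsPrefixNormal (w : List Bool) : Prop :=
  ∀ u : List Bool, u <:+: w → u.count true ≤ (w.take u.length).count true

/-- The number of prefix normal words of length `n`. -/
noncomputable def pnw (n : ℕ) : ℕ :=
  Nat.card {w : List Bool // w.length = n ∧ IsPrefixNormal w}

/-! A factor of `w ++ v`, where `v` consists of zeros, has all its 1s in a part that lies in `w`.
Prefix normality of `w` bounds their number by the 1s of a prefix that is no longer than the factor,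
and lengthening a prefix or extending the word never loses 1s. -/

theorem exists_infix_prefix_count_eq_of_infix_append {α : Type*} [BEq α] [LawfulBEq α]
    {a : α} {u l l' : List α} (ha : a ∉ l') (hu : u <:+: l ++ l') :
    ∃ t, t <:+: l ∧ t <+: u ∧ t.count a = u.count a := by
  have count_eq_zero {s : List α} (hs : s <:+: l') : s.count a = 0 :=
    List.count_eq_zero_of_not_mem fun h => ha (hs.subset h)
  rcases List.infix_append_iff.mp hu with hul | hul' | ⟨t, s, rfl, ht, hs⟩
  · exact ⟨u, hul, List.prefix_rfl, rfl⟩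
  · exact ⟨[], List.nil_infix, List.nil_prefix, (count_eq_zero hul').symm⟩
  · exact ⟨t, ht.isInfix, List.prefix_append t s,
      by rw [List.count_append, count_eq_zero hs.isInfix, add_zero]⟩

theorem IsPrefixNormal.count_le_count_take {w t : List Bool} {n : ℕ} (hw : IsPrefixNormal w)
    (ht : t <:+: w) (hn : t.length ≤ n) : t.count true ≤ (w.take n).count true :=
  (hw t ht).trans ((List.take_sublist_take_left hn).count_le true)

theorem prefixNormal_append_zero_general {w v : List Bool} (hw : IsPrefixNormal w)
    (hv : true ∉ v) : IsPrefixNormal (w ++ v) := by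
  intro u hu
  obtain ⟨t, htw, htu, hcount⟩ := exists_infix_prefix_count_eq_of_infix_append hv hu
  calc u.count true = t.count true := hcount.symm
    _ ≤ (w.take u.length).count true := hw.count_le_count_take htw htu.length_le
    _ ≤ ((w ++ v).take u.length).count true :=
      ((List.prefix_append w v).take u.length).sublist.count_le true

theorem prefixNormal_append_zero (w : List Bool)
    (hw : IsPrefixNormal w) : IsPrefixNormal (w ++ [false]) :=
  prefixNormal_append_zero_general hw (by simp)
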